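/- Let r ≥ 1 and let H be any finite simple graph on r vertices, with e edges, n₃ triangles, and n₂ three-element vertex subsets spanning exactly two edges. For 1 ≤ l ≤ r set x_l = ∑_{i=1}^{l} C(r_i^{(l)}, 2) and y_l = 3·∑_{i=1}^{l} C(r_i^{(l)}, 3), where r_i^{(l)} = ⌊(r+i−1)/l⌋ (these are the edge and weighted-triangle counts of the disjoint union of l balanced complete graphs on r vertices). Then for every 1 ≤ l ≤ r−1, the point (e, 3n₃ + 2n₂) lies on or above the line through (x_l, y_l) and (x_{l+1}, y_{l+1}); that is, (e − x_{l+1})·(y_l − y_{l+1}) ≤ (3n₃ + 2n₂ − y_{l+1})·(x_l − x_{l+1}). -/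

import Mathlib

open SimpleGraph

/-- The number of edges of `H` spanned by a finset `s` of vertices (i.e. with both
endpoints in `s`). -/
noncomputable def spannedEdges {V : Type*} (H : SimpleGraph V) (s : Finset V) : ℕ :=
  Nat.card {e : Sym2 V // e ∈ H.edgeSet ∧ ∀ v ∈ e, v ∈ s}

/-- `nCount H i` is the number of 3-element vertex subsets of `H` spanning exactly `i` edges. -/
noncomputable def nCount {V : Type*} (H : SimpleGraph V) (i : ℕ) : ℕ :=
  Nat.card {s : Finset V // s.card = 3 ∧ spannedEdges H s = i}

/-- `xCoord r l = ∑_{i=1}^{l} C(r_i, 2)` where `r_i = ⌊(r+i-1)/l⌋` is the balanced partition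
of `r` into `l` parts: the number of edges of a disjoint union of `l` balanced cliques. -/
def xCoord (r l : ℕ) : ℕ := ∑ i ∈ Finset.range l, ((r + i) / l).choose 2

/-- `yCoord r l = 3·∑_{i=1}^{l} C(r_i, 3)` where `r_i = ⌊(r+i-1)/l⌋`: the weighted
triangle count of a disjoint union of `l` balanced cliques on `r` vertices. -/
def yCoord (r l : ℕ) : ℕ := 3 * ∑ i ∈ Finset.range l, ((r + i) / l).choose 3

/-! Counting ordered pairs and triples with the reflexive relation `x = y ∨ H.Adj x y` turns `e`
into `P₂ = 2 * e + r` and `y = 3 * n₃ + 2 * n₂` into `P₃ = 2 * y + 6 * e + r`; for a disjoint union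
of cliques of sizes `a` these are the power sums `∑ a ^ 2` and `∑ a ^ 3`. For `α > 0`, replacing the
closed neighbourhood of `u` by that of an adjacent `v`, or vice versa, changes `α P₃ - β P₂` on
average by `-α` times the squared distance of the two neighbourhoods. So in a minimiser adjacent
vertices are twins, and it is a disjoint union of cliques. Merging two cliques or moving a vertex
between them makes the sizes balanced. Summing `a * (a - q) * (a - q - 1) ≥ 0`, an equality for
sizes `q` and `q + 1`, yields a line of slope `2 * q + 1` through the balanced point `(P₂, P₃)` that
supports all the others, and comparing slopes gives the claim. -/

open Finset

section PowerSums

/-- The power sum `∑ a ∈ s, a ^ n` of a multiset of part sizes. It is integer-valued because the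
inequalities between power sums involve subtraction. -/
def powerSum (s : Multiset ℕ) (n : ℕ) : ℤ := (s.map fun a => (a : ℤ) ^ n).sum

/-- All parts are `q` or `q + 1`. When every part is `q`, both `q` and `q - 1` are admissible
second arguments. -/
def IsBalanced (s : Multiset ℕ) (q : ℕ) : Prop := ∀ a ∈ s, a = q ∨ a = q + 1

@[simp]
lemma powerSum_cons (a : ℕ) (s : Multiset ℕ) (n : ℕ) :
    powerSum (a ::ₘ s) n = a ^ n + powerSum s n := by
  simp [powerSum]

lemma powerSum_zero_right (s : Multiset ℕ) : powerSum s 0 = s.card := by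
  simp [powerSum]

lemma powerSum_one_right (s : Multiset ℕ) : powerSum s 1 = s.sum := by
  simp [powerSum, Nat.cast_multiset_sum]

lemma powerSum_nonneg (s : Multiset ℕ) (n : ℕ) : 0 ≤ powerSum s n :=
  Multiset.sum_nonneg (by simp +contextual)

lemma le_powerSum_add_two (s : Multiset ℕ) (q n : ℕ) :
    (2 * q + 1) * powerSum s (n + 1) - q * (q + 1) * powerSum s n ≤ powerSum s (n + 2) := by
  induction s using Multiset.induction with
  | empty => simp [powerSum]
  | cons a s ih =>
    have consecutive : (0 : ℤ) ≤ (a - q) * (a - q - 1) := by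
      rcases le_or_gt a q with h | h
      · exact mul_nonneg_of_nonpos_of_nonpos (by lia) (by lia)
      · exact mul_nonneg (by lia) (by lia)
    have : (0 : ℤ) ≤ (a - q) * (a - q - 1) * a ^ n := mul_nonneg consecutive (by positivity)
    simp only [powerSum_cons]
    linear_combination this + ih

lemma IsBalanced.powerSum_add_two {s : Multiset ℕ} {q : ℕ} (hs : IsBalanced s q) (n : ℕ) :
    powerSum s (n + 2) = (2 * q + 1) * powerSum s (n + 1) - q * (q + 1) * powerSum s n := by
  induction s using Multiset.induction with
  | empty => simp [powerSum]
  | cons a s ih =>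
    simp only [powerSum_cons, ih fun b hb => hs b (Multiset.mem_cons_of_mem hb)]
    rcases hs a (Multiset.mem_cons_self a s) with rfl | rfl
    · ring
    · push_cast
      ring

lemma IsBalanced.powerSum_two_le {s t : Multiset ℕ} {q : ℕ} (hs : IsBalanced s q)
    (hsum : t.sum = s.sum) (hcard : t.card ≤ s.card) : powerSum s 2 ≤ powerSum t 2 := by
  have hs_eq := hs.powerSum_add_two 0
  have ht_le := le_powerSum_add_two t q 0
  have hmul : (q * (q + 1) * t.card : ℤ) ≤ q * (q + 1) * s.card := by gcongr
  simp only [zero_add, powerSum_zero_right, powerSum_one_right, hsum] at hs_eq ht_le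
  linarith

lemma IsBalanced.powerSum_two_lt {s t : Multiset ℕ} {q : ℕ} (hs : IsBalanced s q) (hq : 0 < q)
    (hsum : t.sum = s.sum) (hcard : t.card < s.card) : powerSum s 2 < powerSum t 2 := by
  have hs_eq := hs.powerSum_add_two 0
  have ht_le := le_powerSum_add_two t q 0
  have hmul : (q * (q + 1) * t.card : ℤ) < q * (q + 1) * s.card := by gcongr
  simp only [zero_add, powerSum_zero_right, powerSum_one_right, hsum] at hs_eq ht_le
  linarith

lemma IsBalanced.mul_powerSum_two_sub_le {s t : Multiset ℕ} {q : ℕ} (hs : IsBalanced s q)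
    (hsum : t.sum = s.sum) :
    (2 * q + 1) * (powerSum t 2 - powerSum s 2) ≤ powerSum t 3 - powerSum s 3 := by
  have hs_eq := hs.powerSum_add_two 1
  have ht_le := le_powerSum_add_two t q 1
  simp only [Nat.reduceAdd, powerSum_one_right, hsum] at hs_eq ht_le
  linarith

-- No multiset has a number of parts strictly between those of `t` and `t'`, so `s` lies on the
-- outer side of one of them, where the tangent there has a slope that beats the chord.
lemma IsBalanced.above_chord {s t t' : Multiset ℕ} {p q q' : ℕ} (hs : IsBalanced s p)
    (ht : IsBalanced t q) (ht' : IsBalanced t' q') (hst : s.sum = t.sum) (htt' : t'.sum = t.sum)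
    (hcard : t'.card = t.card + 1) :
    (powerSum s 2 - powerSum t' 2) * (powerSum t 3 - powerSum t' 3) ≤
      (powerSum s 3 - powerSum t' 3) * (powerSum t 2 - powerSum t' 2) := by
  have htt'_two : 0 ≤ powerSum t 2 - powerSum t' 2 :=
    sub_nonneg.2 (ht'.powerSum_two_le htt'.symm (by lia))
  rcases le_or_gt s.card t.card with h | h
  · have hs_two : 0 ≤ powerSum s 2 - powerSum t 2 := sub_nonneg.2 (ht.powerSum_two_le hst h)
    have chord_slope := mul_le_mul_of_nonneg_left (ht.mul_powerSum_two_sub_le htt') hs_two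
    have tangent := mul_le_mul_of_nonneg_right (ht.mul_powerSum_two_sub_le hst) htt'_two
    linarith
  · have hs_two : 0 ≤ powerSum t' 2 - powerSum s 2 :=
      sub_nonneg.2 (hs.powerSum_two_le (htt'.trans hst.symm) (by lia))
    have chord_slope := mul_le_mul_of_nonneg_left (ht'.mul_powerSum_two_sub_le htt'.symm) hs_two
    have tangent := mul_le_mul_of_nonneg_right
      (ht'.mul_powerSum_two_sub_le (hst.trans htt'.symm)) htt'_two
    linarith

lemma exists_isBalanced_of_le_add_one {s : Multiset ℕ} (h : ∀ i ∈ s, ∀ j ∈ s, i ≤ j + 1) :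
    ∃ q, IsBalanced s q :=
  Set.equitableOn_iff_exists_eq_eq_add_one.1
    (show {a | a ∈ s}.EquitableOn id from fun i j hi hj => h i hi j hj)

-- Merging `i` and `j` changes `α ∑ a ^ 3 - β ∑ a ^ 2` by `i * j * (3 * α * (i + j) - 2 * β)`, and
-- moving one unit from `j` to `i` changes it by `-(j - i - 1) * (3 * α * (i + j) - 2 * β)`.
lemma exists_merge_or_transfer (α β : ℤ) {s : Multiset ℕ} {i j : ℕ} (hi : i ∈ s) (hj : j ∈ s)
    (hij : i + 1 < j) :
    ∃ t : Multiset ℕ, t.sum = s.sum ∧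
      α * powerSum t 3 - β * powerSum t 2 ≤ α * powerSum s 3 - β * powerSum s 2 ∧
      (t.card < s.card ∨ t.card = s.card ∧ powerSum t 2 < powerSum s 2) := by
  obtain ⟨s, rfl⟩ := Multiset.exists_cons_of_mem hj
  obtain ⟨u, rfl⟩ := Multiset.exists_cons_of_mem ((Multiset.mem_cons.1 hi).resolve_left (by lia))
  obtain ⟨d, rfl⟩ := Nat.exists_eq_add_of_lt hij
  rcases le_total (3 * α * (2 * i + d + 2)) (2 * β) with h | h
  · refine ⟨(i + 1 + d + 1 + i) ::ₘ u, by simp [add_assoc], ?_, Or.inl (by simp)⟩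
    have := mul_nonneg (show (0 : ℤ) ≤ i * (i + d + 2) by positivity) (sub_nonneg.2 h)
    simp only [powerSum_cons]
    push_cast
    linear_combination this
  · refine ⟨(i + d + 1) ::ₘ (i + 1) ::ₘ u, by simp; ring, ?_, Or.inr ⟨by simp, ?_⟩⟩
    · have := mul_nonneg (show (0 : ℤ) ≤ d + 1 by positivity) (sub_nonneg.2 h)
      simp only [powerSum_cons]
      push_cast
      linear_combination this
    · simp only [powerSum_cons]
      push_cast
      linarith

theorem exists_isBalanced_le (α β : ℤ) (s : Multiset ℕ) :
    ∃ t q, IsBalanced t q ∧ t.sum = s.sum ∧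
      α * powerSum t 3 - β * powerSum t 2 ≤ α * powerSum s 3 - β * powerSum s 2 := by
  induction hs : toLex (s.card, (powerSum s 2).toNat) using WellFoundedLT.induction generalizing s
    with | _ _ ih
  subst hs
  by_cases! h : ∀ j ∈ s, ∀ i ∈ s, j ≤ i + 1
  · obtain ⟨q, hq⟩ := exists_isBalanced_of_le_add_one h
    exact ⟨s, q, hq, rfl, le_rfl⟩
  · obtain ⟨j, hj, i, hi, hij⟩ := h
    obtain ⟨t, ht_sum, ht_le, ht_smaller⟩ := exists_merge_or_transfer α β hi hj hij
    have ht_two := powerSum_nonneg t 2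
    obtain ⟨u, q, hu, hu_sum, hu_le⟩ := ih _
      (Prod.Lex.toLex_lt_toLex.2 (ht_smaller.imp_right (And.imp_right (by lia)))) t rfl
    exact ⟨u, q, hu, hu_sum.trans ht_sum, hu_le.trans ht_le⟩

end PowerSums

section BalancedParts

/-- The sizes `⌊(r + i) / l⌋`, `i < l`, of the balanced partition of `r` into `l` parts used by
`xCoord` and `yCoord`. -/
def balancedParts (r l : ℕ) : Multiset ℕ := (Multiset.range l).map fun i => (r + i) / l

lemma card_balancedParts (r l : ℕ) : (balancedParts r l).card = l := by
  simp [balancedParts]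

lemma isBalanced_balancedParts (r l : ℕ) : IsBalanced (balancedParts r l) (r / l) := by
  intro a ha
  obtain ⟨i, hi, rfl⟩ := Multiset.mem_map.1 ha
  have hil := Multiset.mem_range.1 hi
  have lower : r / l ≤ (r + i) / l := Nat.div_le_div_right (by lia)
  have upper : (r + i) / l ≤ (r + l) / l := Nat.div_le_div_right (by lia)
  rw [Nat.add_div_right r (by lia)] at upper
  lia

lemma sum_range_add_div (r : ℕ) {l : ℕ} (hl : 0 < l) : ∑ i ∈ range l, (r + i) / l = r := by
  induction r with
  | zero => exact sum_eq_zero fun i hi => by simpa using Or.inr (mem_range.1 hi)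
  | succ r ih =>
    -- Passing from `r` to `r + 1` shifts the summands by one index.
    have shift := sum_range_succ (fun i => (r + i) / l) l
    rw [sum_range_succ', ih, Nat.add_div_right _ hl, add_zero] at shift
    simp only [add_right_comm r 1, add_assoc] at shift ⊢
    lia

lemma sum_balancedParts (r : ℕ) {l : ℕ} (hl : 0 < l) : (balancedParts r l).sum = r :=
  sum_range_add_div r hl

lemma sq_eq_two_mul_choose_two_add (n : ℕ) : n ^ 2 = 2 * n.choose 2 + n := by
  induction n with
  | zero => rfl
  | succ n ih =>
    rw [Nat.choose_succ_succ', Nat.choose_one_right]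
    linarith

lemma cube_eq_six_mul_choose_three_add (n : ℕ) :
    n ^ 3 = 6 * n.choose 3 + 6 * n.choose 2 + n := by
  induction n with
  | zero => rfl
  | succ n ih =>
    rw [Nat.choose_succ_succ' n 2, Nat.choose_succ_succ' n 1, Nat.choose_one_right]
    linarith [sq_eq_two_mul_choose_two_add n]

lemma powerSum_balancedParts (r l n : ℕ) :
    powerSum (balancedParts r l) n = (∑ i ∈ range l, ((r + i) / l) ^ n : ℕ) := by
  simp [powerSum, balancedParts, Finset.sum]

lemma powerSum_two_balancedParts (r : ℕ) {l : ℕ} (hl : 0 < l) :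
    powerSum (balancedParts r l) 2 = 2 * xCoord r l + r := by
  rw [powerSum_balancedParts]
  norm_cast
  simp only [sq_eq_two_mul_choose_two_add, sum_add_distrib, ← mul_sum, xCoord,
    sum_range_add_div r hl]

lemma powerSum_three_balancedParts (r : ℕ) {l : ℕ} (hl : 0 < l) :
    powerSum (balancedParts r l) 3 = 2 * yCoord r l + 6 * xCoord r l + r := by
  rw [powerSum_balancedParts]
  norm_cast
  simp only [cube_eq_six_mul_choose_three_add, sum_add_distrib, ← mul_sum, xCoord, yCoord,
    sum_range_add_div r hl]
  ring

end BalancedParts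

section ClosedAdjacency

variable {V : Type*}

open Classical in
/-- The indicator of closed adjacency `x = y ∨ H.Adj x y`, with values in `ℤ`. Counting with it
instead of `H.Adj` turns a disjoint union of cliques into power sums of the clique sizes. -/
noncomputable def closedAdj (H : SimpleGraph V) (x y : V) : ℤ := if x = y ∨ H.Adj x y then 1 else 0

lemma closedAdj_congr {W : Type*} {H : SimpleGraph V} {G : SimpleGraph W} {x y : V} {z w : W}
    (h : x = y ∨ H.Adj x y ↔ z = w ∨ G.Adj z w) : closedAdj H x y = closedAdj G z w := by
  classical exact if_congr h rfl rfl

lemma closedAdj_eq_one_iff {H : SimpleGraph V} {x y : V} :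
    closedAdj H x y = 1 ↔ x = y ∨ H.Adj x y := by
  unfold closedAdj
  split_ifs with h <;> simp [h]

@[simp]
lemma closedAdj_self (H : SimpleGraph V) (x : V) : closedAdj H x x = 1 :=
  closedAdj_eq_one_iff.2 (Or.inl rfl)

lemma closedAdj_comm (H : SimpleGraph V) (x y : V) : closedAdj H x y = closedAdj H y x :=
  closedAdj_congr (or_congr eq_comm (H.adj_comm x y))

lemma closedAdj_eq_zero_or_one (H : SimpleGraph V) (x y : V) :
    closedAdj H x y = 0 ∨ closedAdj H x y = 1 := by
  unfold closedAdj
  split_ifs <;> simp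

/-- The graph whose closed adjacency is pulled back from `H` along `σ`. The complements make
distinct vertices with the same image adjacent, whereas `H.comap σ` would separate them. For
`σ = Function.update id u v` it turns `u` into an adjacent twin of `v`. -/
def closedComap (H : SimpleGraph V) (σ : V → V) : SimpleGraph V := (Hᶜ.comap σ)ᶜ

lemma closedAdj_closedComap (H : SimpleGraph V) (σ : V → V) (x y : V) :
    closedAdj (closedComap H σ) x y = closedAdj H (σ x) (σ y) := by
  refine closedAdj_congr ?_
  by_cases h : x = y
  · simp [h]
  · simp [closedComap, h, imp_iff_not_or]

/-- The indicator that `x, y` are equal or adjacent and that `z` lies in the union of their closed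
neighbourhoods, written by inclusion-exclusion. -/
noncomputable def closedTriple (H : SimpleGraph V) (x y z : V) : ℤ :=
  closedAdj H x y * (closedAdj H x z + closedAdj H y z - closedAdj H x z * closedAdj H y z)

lemma closedTriple_self_left (H : SimpleGraph V) (x z : V) :
    closedTriple H x x z = closedAdj H x z := by
  rcases closedAdj_eq_zero_or_one H x z with h | h <;> simp [closedTriple, h]

lemma closedTriple_self_right (H : SimpleGraph V) (x y : V) :
    closedTriple H x y y = closedAdj H x y := by
  simp [closedTriple]

lemma closedTriple_self_outer (H : SimpleGraph V) (x y : V) :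
    closedTriple H x y x = closedAdj H x y := by
  simp [closedTriple]

lemma closedTriple_closedComap (H : SimpleGraph V) (σ : V → V) (x y z : V) :
    closedTriple (closedComap H σ) x y z = closedTriple H (σ x) (σ y) (σ z) := by
  simp only [closedTriple, closedAdj_closedComap]

variable [Fintype V]

/-- The number of ordered pairs of equal or adjacent vertices. -/
noncomputable def closedPairSum (H : SimpleGraph V) : ℤ := ∑ x, ∑ y, closedAdj H x y

/-- The number of ordered triples counted by `closedTriple`, which is `∑ a ^ 3` for a disjoint
union of cliques of sizes `a`. -/
noncomputable def closedTripleSum (H : SimpleGraph V) : ℤ := ∑ x, ∑ y, ∑ z, closedTriple H x y z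

end ClosedAdjacency

section Symmetrization

variable {V : Type*} [DecidableEq V] {R : Type*} [CommRing R]

/-- The difference of the indicators of `v` and `u`. Re-indexing a sum by the map that sends `u` to
`v` and fixes all other points amounts to weighting it by `1 + indicatorDiff u v`. -/
def indicatorDiff (u v x : V) : R := (if x = v then 1 else 0) - if x = u then 1 else 0

lemma indicatorDiff_swap (u v x : V) : indicatorDiff (R := R) v u x = -indicatorDiff u v x := by
  simp [indicatorDiff]

variable [Fintype V]

lemma sum_indicatorDiff_mul (u v : V) (g : V → R) :
    ∑ x, indicatorDiff u v x * g x = g v - g u := by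
  simp [indicatorDiff, sub_mul, sum_sub_distrib]

lemma sum_comp_update_id (u v : V) (g : V → R) :
    ∑ x, g (Function.update id u v x) = ∑ x, (1 + indicatorDiff u v x) * g x := by
  have pointwise (x : V) : g (Function.update id u v x) = g x + if x = u then g v - g u else 0 := by
    by_cases h : x = u
    · subst h
      simp
    · simp [h]
  simp [pointwise, add_mul, sum_add_distrib, sum_indicatorDiff_mul]

lemma sum_sum_comp_update_id (u v : V) (f : V → V → R) :
    ∑ x, ∑ y, f (Function.update id u v x) (Function.update id u v y) =
      ∑ x, ∑ y, (1 + indicatorDiff u v x) * ((1 + indicatorDiff u v y) * f x y) := by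
  rw [sum_comp_update_id u v fun x => ∑ y, f x (Function.update id u v y)]
  simp only [sum_comp_update_id u v (f _), mul_sum]

lemma sum_sum_sum_comp_update_id (u v : V) (f : V → V → V → R) :
    ∑ x, ∑ y, ∑ z, f (Function.update id u v x) (Function.update id u v y)
        (Function.update id u v z) =
      ∑ x, ∑ y, ∑ z, (1 + indicatorDiff u v x) *
        ((1 + indicatorDiff u v y) * ((1 + indicatorDiff u v z) * f x y z)) := by
  rw [sum_sum_comp_update_id u v fun x y => ∑ z, f x y (Function.update id u v z)]
  simp only [sum_comp_update_id u v (f _ _), mul_sum]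

-- With `d = indicatorDiff u v`, terms of odd degree in `d` cancel between `1 + d` and `1 - d`.
lemma sum_sum_comp_update_id_add_swap (u v : V) (f : V → V → R) :
    (∑ x, ∑ y, f (Function.update id u v x) (Function.update id u v y)) +
      ∑ x, ∑ y, f (Function.update id v u x) (Function.update id v u y) =
    2 * ∑ x, ∑ y, f x y + 2 * (f v v - f v u - f u v + f u u) := by
  have mixed : ∑ x, ∑ y, indicatorDiff u v x * (indicatorDiff u v y * f x y) =
      f v v - f v u - f u v + f u u := by
    simp only [← mul_sum, sum_indicatorDiff_mul]
    ring
  rw [sum_sum_comp_update_id, sum_sum_comp_update_id, ← mixed]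
  simp only [indicatorDiff_swap u v, ← sum_add_distrib, mul_sum]
  exact sum_congr rfl fun x _ => sum_congr rfl fun y _ => by ring

lemma sum_sum_sum_comp_update_id_add_swap (u v : V) (f : V → V → V → R) :
    (∑ x, ∑ y, ∑ z, f (Function.update id u v x) (Function.update id u v y)
        (Function.update id u v z)) +
      ∑ x, ∑ y, ∑ z, f (Function.update id v u x) (Function.update id v u y)
        (Function.update id v u z) =
    2 * ∑ x, ∑ y, ∑ z, f x y z + 2 * ∑ z, ((f v v z - f v u z - f u v z + f u u z) +
      (f v z v - f v z u - f u z v + f u z u) + (f z v v - f z v u - f z u v + f z u u)) := by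
  set d : V → R := indicatorDiff u v with hd
  have mixed (g : V → V → R) : ∑ x, ∑ y, d x * (d y * g x y) = g v v - g v u - g u v + g u u := by
    simp only [← mul_sum, hd, sum_indicatorDiff_mul]
    ring
  have mixed_xy : ∑ x, ∑ y, ∑ z, d x * (d y * f x y z) =
      ∑ z, (f v v z - f v u z - f u v z + f u u z) := by
    rw [sum_comm_cycle]
    exact sum_congr rfl fun z _ => mixed fun x y => f x y z
  have mixed_xz : ∑ x, ∑ y, ∑ z, d x * (d z * f x y z) =
      ∑ z, (f v z v - f v z u - f u z v + f u z u) := by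
    rw [sum_comm]
    simp only [mixed fun x z => f x _ z]
  have mixed_yz : ∑ x, ∑ y, ∑ z, d y * (d z * f x y z) =
      ∑ z, (f z v v - f z v u - f z u v + f z u u) := by
    simp only [mixed (f _)]
  rw [sum_sum_sum_comp_update_id, sum_sum_sum_comp_update_id, sum_add_distrib, sum_add_distrib,
    ← mixed_xy, ← mixed_xz, ← mixed_yz]
  simp only [indicatorDiff_swap u v, ← hd, ← sum_add_distrib, mul_sum]
  exact sum_congr rfl fun x _ => sum_congr rfl fun y _ => sum_congr rfl fun z _ => by ring

end Symmetrization
section ExtremalGraphs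

variable {V : Type*} [Fintype V]

lemma closedPairSum_closedComap_update_add_swap [DecidableEq V] (H : SimpleGraph V) {u v : V}
    (huv : H.Adj u v) :
    closedPairSum (closedComap H (Function.update id u v)) +
      closedPairSum (closedComap H (Function.update id v u)) = 2 * closedPairSum H := by
  have huv_one : closedAdj H u v = 1 := closedAdj_eq_one_iff.2 (Or.inr huv)
  simp only [closedPairSum, closedAdj_closedComap]
  rw [sum_sum_comp_update_id_add_swap]
  simp [closedAdj_comm H v u, huv_one]

lemma closedTripleSum_closedComap_update_add_swap [DecidableEq V] (H : SimpleGraph V) {u v : V}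
    (huv : H.Adj u v) :
    closedTripleSum (closedComap H (Function.update id u v)) +
      closedTripleSum (closedComap H (Function.update id v u)) =
    2 * closedTripleSum H - 2 * ∑ z, (closedAdj H u z - closedAdj H v z) ^ 2 := by
  have huv_one : closedAdj H u v = 1 := closedAdj_eq_one_iff.2 (Or.inr huv)
  simp only [closedTripleSum, closedTriple_closedComap]
  rw [sum_sum_sum_comp_update_id_add_swap u v (closedTriple H), sub_eq_add_neg, ← mul_neg,
    ← sum_neg_distrib]
  congr! 3 with z
  simp only [closedTriple, closedAdj_self, closedAdj_comm H z, closedAdj_comm H v u, huv_one]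
  ring

lemma closedAdj_eq_of_minimal {α β : ℤ} (hα : 0 < α) {H : SimpleGraph V}
    (hmin : ∀ G : SimpleGraph V, α * closedTripleSum H - β * closedPairSum H ≤
      α * closedTripleSum G - β * closedPairSum G) {u v : V} (huv : H.Adj u v) :
    closedAdj H u = closedAdj H v := by
  classical
  have mul_sum_sq_nonpos : α * ∑ z, (closedAdj H u z - closedAdj H v z) ^ 2 ≤ 0 := by
    have to_v := hmin (closedComap H (Function.update id u v))
    have to_u := hmin (closedComap H (Function.update id v u))
    have pairs := closedPairSum_closedComap_update_add_swap H huv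
    have triples := closedTripleSum_closedComap_update_add_swap H huv
    have doubled : 2 * (α * ∑ z, (closedAdj H u z - closedAdj H v z) ^ 2) ≤ 0 := by
      linear_combination to_v + to_u - β * pairs + α * triples
    linarith
  have sum_sq_eq_zero : ∑ z, (closedAdj H u z - closedAdj H v z) ^ 2 = 0 :=
    (nonpos_of_mul_nonpos_right mul_sum_sq_nonpos hα).antisymm
      (sum_nonneg fun z _ => sq_nonneg _)
  funext z
  have := (sum_eq_zero_iff_of_nonneg fun z _ => sq_nonneg _).1 sum_sq_eq_zero z (mem_univ z)
  exact sub_eq_zero.1 (pow_eq_zero_iff two_ne_zero |>.1 this)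

/-- The sizes of the nonempty fibres of `f`. -/
def fiberCards {α β : Type*} [Fintype α] [DecidableEq β] (f : α → β) : Multiset ℕ :=
  (univ.image f).val.map fun b => #{a | f a = b}

lemma powerSum_fiberCards_succ {α β : Type*} [Fintype α] [DecidableEq β] (f : α → β) (n : ℕ) :
    powerSum (fiberCards f) (n + 1) = ∑ a, (#{a' | f a' = f a} : ℤ) ^ n := by
  rw [sum_comp (fun b => (#{a' | f a' = b} : ℤ) ^ n) f]
  simp [powerSum, fiberCards, Finset.sum, pow_succ']

lemma sum_fiberCards {α β : Type*} [Fintype α] [DecidableEq β] (f : α → β) :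
    (fiberCards f).sum = Fintype.card α := by
  have h := powerSum_fiberCards_succ f 0
  simp only [zero_add, powerSum_one_right, pow_zero, sum_const, card_univ, nsmul_one] at h
  exact_mod_cast h

lemma exists_powerSum_eq_of_twins {H : SimpleGraph V}
    (htwin : ∀ u v, H.Adj u v → closedAdj H u = closedAdj H v) :
    ∃ s : Multiset ℕ, s.sum = Fintype.card V ∧ closedPairSum H = powerSum s 2 ∧
      closedTripleSum H = powerSum s 3 := by
  classical
  have rows_eq {x y : V} (h : closedAdj H x y = 1) : closedAdj H x = closedAdj H y := by
    rcases closedAdj_eq_one_iff.1 h with rfl | h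
    · rfl
    · exact htwin x y h
  have adj_indicator (x y : V) :
      closedAdj H x y = if closedAdj H y = closedAdj H x then 1 else 0 := by
    split_ifs with h
    · rw [← h, closedAdj_self]
    · exact (closedAdj_eq_zero_or_one H x y).resolve_right fun hxy => h (rows_eq hxy).symm
  have class_card (x : V) : (#{y | closedAdj H y = closedAdj H x} : ℤ) = ∑ y, closedAdj H x y := by
    simp [adj_indicator x]
  have triple_eq (x y z : V) : closedTriple H x y z = closedAdj H x y * closedAdj H x z := by
    rcases closedAdj_eq_zero_or_one H x y with h | h
    · simp [closedTriple, h]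
    · rcases closedAdj_eq_zero_or_one H x z with hz | hz <;>
        simp [closedTriple, ← rows_eq h, hz]
  refine ⟨fiberCards (closedAdj H), sum_fiberCards _, ?_, ?_⟩
  · simp [powerSum_fiberCards_succ, class_card, closedPairSum]
  · simp [powerSum_fiberCards_succ, class_card, closedTripleSum, triple_eq, sq, sum_mul_sum]

lemma exists_isBalanced_le_closedTripleSum {α : ℤ} (hα : 0 < α) (β : ℤ) (H : SimpleGraph V) :
    ∃ s q, IsBalanced s q ∧ s.sum = Fintype.card V ∧
      α * powerSum s 3 - β * powerSum s 2 ≤ α * closedTripleSum H - β * closedPairSum H := by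
  classical
  obtain ⟨G, hmin⟩ := Finite.exists_min fun G : SimpleGraph V =>
    α * closedTripleSum G - β * closedPairSum G
  obtain ⟨s, hs_sum, hs_two, hs_three⟩ :=
    exists_powerSum_eq_of_twins fun u v => closedAdj_eq_of_minimal hα hmin
  obtain ⟨t, q, ht, ht_sum, ht_le⟩ := exists_isBalanced_le α β s
  refine ⟨t, q, ht, ht_sum.trans hs_sum, ht_le.trans ?_⟩
  rw [← hs_two, ← hs_three]
  exact hmin H

theorem IsBalanced.closedTripleSum_above_chord {t t' : Multiset ℕ} {q q' : ℕ}
    (ht : IsBalanced t q) (ht' : IsBalanced t' q') (hq' : 0 < q') (htt' : t'.sum = t.sum)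
    (hcard : t'.card = t.card + 1) {H : SimpleGraph V} (hV : Fintype.card V = t.sum) :
    (closedPairSum H - powerSum t' 2) * (powerSum t 3 - powerSum t' 3) ≤
      (closedTripleSum H - powerSum t' 3) * (powerSum t 2 - powerSum t' 2) := by
  have htt'_two := ht'.powerSum_two_lt hq' htt'.symm (by lia)
  obtain ⟨s, p, hs, hs_sum, hs_le⟩ := exists_isBalanced_le_closedTripleSum
    (sub_pos.2 htt'_two) (powerSum t 3 - powerSum t' 3) H
  linarith [hs.above_chord ht ht' (hs_sum.trans hV) htt' hcard]

end ExtremalGraphs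
section Counting

variable {V : Type*}

lemma closedPairSum_eq [Fintype V] (H : SimpleGraph V) :
    closedPairSum H = 2 * Nat.card H.edgeSet + Fintype.card V := by
  classical
  have closedAdj_eq_add (x y : V) :
      closedAdj H x y = (if H.Adj x y then 1 else 0) + if x = y then 1 else 0 := by
    by_cases h : x = y
    · simp [h]
    · simp [closedAdj, h]
  have hdeg : ∑ v, (H.degree v : ℤ) = 2 * Nat.card H.edgeSet := by
    rw [Nat.card_eq_fintype_card, ← edgeFinset_card]
    exact_mod_cast H.sum_degrees_eq_twice_card_edges
  simp only [degree_eq_sum_if_adj] at hdeg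
  simp only [closedPairSum, closedAdj_eq_add, sum_add_distrib, hdeg]
  simp

lemma spannedEdges_eq_card_edgeSet_induce (H : SimpleGraph V) (s : Finset V) :
    spannedEdges H s = Nat.card (H.induce (s : Set V)).edgeSet := by
  have image_eq : Sym2.map (↑) '' (H.induce (s : Set V)).edgeSet =
      {e | e ∈ H.edgeSet ∧ ∀ v ∈ e, v ∈ s} := by
    ext e
    constructor
    · rintro ⟨⟨x, y⟩, hadj, rfl⟩
      exact ⟨hadj, by simp⟩
    · rintro ⟨hadj, hmem⟩
      induction e with | _ x y
      exact ⟨s(⟨x, hmem x (Sym2.mem_mk_left x y)⟩, ⟨y, hmem y (Sym2.mem_mk_right x y)⟩), hadj, rfl⟩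
  exact (congrArg Nat.card (congrArg _ image_eq.symm)).trans
    (Nat.card_image_of_injective (Sym2.map.injective Subtype.val_injective) _)

lemma closedPairSum_induce (H : SimpleGraph V) (s : Finset V) :
    closedPairSum (H.induce (s : Set V)) = ∑ x ∈ s, ∑ y ∈ s, closedAdj H x y := by
  have (x y : (s : Set V)) : closedAdj (H.induce (s : Set V)) x y = closedAdj H x y :=
    closedAdj_congr (or_congr_left Subtype.ext_iff)
  simp only [closedPairSum, this]
  rw [← sum_coe_sort s]
  exact sum_congr rfl fun x _ => sum_coe_sort s (closedAdj H x)

lemma sum_sum_closedAdj (H : SimpleGraph V) (s : Finset V) :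
    ∑ x ∈ s, ∑ y ∈ s, closedAdj H x y = 2 * spannedEdges H s + #s := by
  rw [← closedPairSum_induce, closedPairSum_eq, spannedEdges_eq_card_edgeSet_induce]
  simp

lemma spannedEdges_triple [DecidableEq V] (H : SimpleGraph V) {a b c : V} (hab : a ≠ b)
    (hac : a ≠ c) (hbc : b ≠ c) :
    (spannedEdges H {a, b, c} : ℤ) = closedAdj H a b + closedAdj H a c + closedAdj H b c := by
  have h := sum_sum_closedAdj H {a, b, c}
  simp only [sum_insert (show a ∉ {b, c} by simp [hab, hac]), sum_insert (show b ∉ {c} by simpa),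
    sum_singleton, closedAdj_self, closedAdj_comm H b a, closedAdj_comm H c a, closedAdj_comm H c b,
    card_eq_three.2 ⟨a, b, c, hab, hac, hbc, rfl⟩] at h
  push_cast at h
  linarith

lemma sum_distinct_insert_insert_singleton [DecidableEq V] {M : Type*} [AddCommMonoid M]
    (f : V → V → V → M) {a b c : V} (hab : a ≠ b) (hac : a ≠ c) (hbc : b ≠ c) :
    (∑ x ∈ {a, b, c}, ∑ y ∈ {a, b, c}, ∑ z ∈ {a, b, c},
      if x ≠ y ∧ x ≠ z ∧ y ≠ z then f x y z else 0) =
      f a b c + f a c b + f b a c + f b c a + f c a b + f c b a := by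
  simp only [sum_insert (show a ∉ {b, c} by simp [hab, hac]), sum_insert (show b ∉ {c} by simpa),
    sum_singleton]
  simp [hab, hac, hbc, hab.symm, hac.symm, hbc.symm, add_assoc]

variable [Fintype V]

lemma nCount_eq_card_filter (H : SimpleGraph V) (i : ℕ) :
    nCount H i = #{s ∈ powersetCard 3 univ | spannedEdges H s = i} :=
  Nat.subtype_card _ (by simp)

lemma sum_sum_sum_eq_sum_distinct_add [DecidableEq V] {M : Type*} [AddCommGroup M]
    (f : V → V → V → M) :
    ∑ x, ∑ y, ∑ z, f x y z =
      (∑ x, ∑ y, ∑ z, if x ≠ y ∧ x ≠ z ∧ y ≠ z then f x y z else 0) +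
        ∑ x, ∑ y, (f x x y + f x y x + f x y y) - 2 • ∑ x, f x x x := by
  have pointwise (x y z : V) : f x y z =
      (if x ≠ y ∧ x ≠ z ∧ y ≠ z then f x y z else 0) + (if x = y then f x x z else 0) +
        (if x = z then f x y x else 0) + (if y = z then f x y y else 0) -
          2 • if x = y then (if x = z then f x x x else 0) else 0 := by
    by_cases hxy : x = y <;> by_cases hxz : x = z <;> by_cases hyz : y = z <;> grind
  have coincide_xy : ∑ x, ∑ y, ∑ z, (if x = y then f x x z else 0) = ∑ x, ∑ y, f x x y :=
    sum_congr rfl fun x _ => by rw [sum_comm]; simp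
  rw [sum_congr rfl fun x _ => sum_congr rfl fun y _ => sum_congr rfl fun z _ => pointwise x y z]
  simp only [sum_add_distrib, sum_sub_distrib, ← smul_sum, coincide_xy]
  simp [add_assoc]

lemma sum_distinct_eq_sum_powersetCard [DecidableEq V] {M : Type*} [AddCommMonoid M]
    (f : V → V → V → M) :
    (∑ x, ∑ y, ∑ z, if x ≠ y ∧ x ≠ z ∧ y ≠ z then f x y z else 0) =
      ∑ s ∈ powersetCard 3 univ, ∑ x ∈ s, ∑ y ∈ s, ∑ z ∈ s,
        if x ≠ y ∧ x ≠ z ∧ y ≠ z then f x y z else 0 := by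
  simp only [← sum_product', univ_product_univ]
  simp only [← sum_filter]
  rw [← sum_fiberwise_of_maps_to (t := powersetCard 3 univ)
    (g := fun p : V × V × V => ({p.1, p.2.1, p.2.2} : Finset V))]
  · refine sum_congr rfl fun s hs => sum_congr ?_ fun _ _ => rfl
    ext ⟨x, y, z⟩
    simp only [mem_filter, mem_univ, true_and, mem_product]
    constructor
    · rintro ⟨h, rfl⟩
      simp [h]
    · rintro ⟨⟨hx, hy, hz⟩, hxy, hxz, hyz⟩
      refine ⟨⟨hxy, hxz, hyz⟩, eq_of_subset_of_card_le (by simp [insert_subset_iff, *]) ?_⟩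
      rw [(mem_powersetCard.1 hs).2, card_eq_three.2 ⟨x, y, z, hxy, hxz, hyz, rfl⟩]
  · rintro ⟨x, y, z⟩ h
    obtain ⟨-, hxy, hxz, hyz⟩ := mem_filter.1 h
    exact mem_powersetCard.2 ⟨subset_univ _, card_eq_three.2 ⟨x, y, z, hxy, hxz, hyz, rfl⟩⟩

lemma sum_distinct_closedTriple [DecidableEq V] (H : SimpleGraph V) :
    (∑ x, ∑ y, ∑ z, if x ≠ y ∧ x ≠ z ∧ y ≠ z then closedTriple H x y z else 0) =
      2 * (3 * nCount H 3 + 2 * nCount H 2) := by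
  rw [sum_distinct_eq_sum_powersetCard, nCount_eq_card_filter, nCount_eq_card_filter,
    card_filter, card_filter]
  push_cast
  simp only [mul_sum, ← sum_add_distrib]
  refine sum_congr rfl fun s hs => ?_
  obtain ⟨a, b, c, hab, hac, hbc, rfl⟩ := card_eq_three.1 (mem_powersetCard.1 hs).2
  have edges := spannedEdges_triple H hab hac hbc
  rw [sum_distinct_insert_insert_singleton _ hab hac hbc]
  simp only [closedTriple, closedAdj_comm H b a, closedAdj_comm H c a, closedAdj_comm H c b]
  rcases closedAdj_eq_zero_or_one H a b with h_ab | h_ab <;>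
    rcases closedAdj_eq_zero_or_one H a c with h_ac | h_ac <;>
    rcases closedAdj_eq_zero_or_one H b c with h_bc | h_bc <;>
    simp only [h_ab, h_ac, h_bc] at edges ⊢ <;> split_ifs <;> lia

lemma closedTripleSum_eq (H : SimpleGraph V) :
    closedTripleSum H =
      2 * (3 * nCount H 3 + 2 * nCount H 2) + 6 * Nat.card H.edgeSet + Fintype.card V := by
  classical
  have hpair := closedPairSum_eq H
  rw [closedPairSum] at hpair
  rw [closedTripleSum, sum_sum_sum_eq_sum_distinct_add, sum_distinct_closedTriple]
  simp only [closedTriple_self_left, closedTriple_self_right, closedTriple_self_outer,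
    closedAdj_self, sum_add_distrib, hpair, sum_const, card_univ, nsmul_one]
  ring

end Counting

/-- For any finite simple graph `H` on `r ≥ 1` vertices with `e` edges, `n₃` triangles and `n₂`
three-element subsets spanning exactly two edges, and every `1 ≤ l ≤ r−1`, the point
`(e, 3n₃ + 2n₂)` lies on or above the line through `(x_l, y_l)` and `(x_{l+1}, y_{l+1})`. -/
theorem point_above_brokenLine {V : Type*} [Fintype V] (r : ℕ) (hr : 1 ≤ r)
    (H : SimpleGraph V) (hcard : Fintype.card V = r)
    (l : ℕ) (hl1 : 1 ≤ l) (hlr : l ≤ r - 1) :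
    ((Nat.card H.edgeSet : ℝ) - (xCoord r (l + 1) : ℝ)) *
        ((yCoord r l : ℝ) - (yCoord r (l + 1) : ℝ)) ≤
      ((3 * (nCount H 3 : ℝ) + 2 * (nCount H 2 : ℝ)) - (yCoord r (l + 1) : ℝ)) *
        ((xCoord r l : ℝ) - (xCoord r (l + 1) : ℝ)) := by
  have sum_l := sum_balancedParts r hl1
  have sum_succ := sum_balancedParts r l.succ_pos
  have above_chord := (isBalanced_balancedParts r l).closedTripleSum_above_chord
    (isBalanced_balancedParts r (l + 1)) (Nat.div_pos (by lia) l.succ_pos)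
    (sum_succ.trans sum_l.symm) (by simp [card_balancedParts]) (hcard.trans sum_l.symm) (H := H)
  simp only [closedPairSum_eq, closedTripleSum_eq, hcard, powerSum_two_balancedParts r hl1,
    powerSum_two_balancedParts r l.succ_pos, powerSum_three_balancedParts r hl1,
    powerSum_three_balancedParts r l.succ_pos] at above_chord
  have : ((Nat.card H.edgeSet : ℤ) - xCoord r (l + 1)) * (yCoord r l - yCoord r (l + 1)) ≤
      (3 * nCount H 3 + 2 * nCount H 2 - yCoord r (l + 1)) * (xCoord r l - xCoord r (l + 1)) := by
    linarith
  exact_mod_cast this
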